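/- For 0 < λ = n/m ≤ 1/2 and τ = t/n fixed, the capacity of the additive-multiplicative matrix channel satisfies lim_{q→∞} C = (m-n)(n-t) (for fixed n, m, t), and lim_{m→∞, n=λm, t=τn} C/(nm) = (1-λ)(1-τ). -/

import Mathlib

open scoped BigOperators

/-- Mutual information (logarithm base `b`) between the input and output of a discrete
memoryless channel with finite input alphabet `α`, finite output alphabet `β`, transition
probabilities `K` and input distribution `p`. -/
noncomputable def mutualInfoB {α β : Type*} [Fintype α] [Fintype β]
    (b : ℝ) (p : α → ℝ) (K : α → β → ℝ) : ℝ :=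
  ∑ x : α, ∑ y : β, p x * K x y *
    Real.logb b (K x y / ∑ x' : α, p x' * K x' y)

/-- The capacity (in base-`b` units) of a discrete channel with transition probabilities `K`:
the supremum of the mutual information over all input distributions. -/
noncomputable def capacityB {α β : Type*} [Fintype α] [Fintype β]
    (b : ℝ) (K : α → β → ℝ) : ℝ :=
  sSup {c : ℝ | ∃ p : α → ℝ, (∀ x, 0 ≤ p x) ∧ (∑ x : α, p x) = 1 ∧ c = mutualInfoB b p K}


/-- Transition probabilities of the additive-multiplicative matrix channel `Y = A(X + W)`,
where `A` is uniform over `GL_n(F_q)` and `W` is uniform over the `n × m` matrices of rank `t`,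
independent of each other and of `X`. -/
noncomputable def ammcKernel (F : Type) [Field F] [Fintype F] (n m t : ℕ)
    (X Y : Matrix (Fin n) (Fin m) F) : ℝ :=
  (Nat.card {p : Matrix.GeneralLinearGroup (Fin n) F ×
        {W : Matrix (Fin n) (Fin m) F // W.rank = t} //
      (p.1 : Matrix (Fin n) (Fin n) F) * (X + (p.2 : Matrix (Fin n) (Fin m) F)) = Y} : ℝ) /
    ((Nat.card (Matrix.GeneralLinearGroup (Fin n) F) : ℝ) *
      (Nat.card {W : Matrix (Fin n) (Fin m) F // W.rank = t} : ℝ))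


/-- The capacity (in `q`-ary units) of the additive-multiplicative matrix channel
`Y = A(X + W)` over `F_q` with `n × m` matrices and `rank W = t`. -/
noncomputable def ammcCapacity (F : Type) [Field F] [Fintype F] (n m t : ℕ) : ℝ :=
  capacityB (Fintype.card F) (ammcKernel F n m t)

/-!
Comparing the output with the law that picks a rank uniformly and then a matrix uniformly of that
rank bounds the mutual information from above: since `2n ≤ m`, every transition probability is at
most `2 ^ (5n) * q ^ ((m - n)(n - t))` times the comparison law. From below, let the input be
uniform among the matrices whose rows with index in a set `J` of size `v ≥ t` vanish. The receiver
knows the row space of `X + W`, and whenever the column space of `W` meets the vectors vanishing on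
`J` trivially, a projection killing `W` and fixing `X` shows that `X` lies in a list of
`q ^ (n * (n - v))` candidates; this fails with probability at most `1 / (q ^ (v - t) * (q - 1))`,
and Fano's inequality for list decoding applies. The choice `v = t` is sharp as `q → ∞`, and
`v = t + √n` as `n → ∞`.
-/

open Filter Finset Matrix Module Real Topology

section MutualInformation

theorem sum_mul_logb_div_nonpos {ι : Type*} {s : Finset ι} {c : ℝ} {a b : ι → ℝ} (hc : 1 < c)
    (ha : ∀ i ∈ s, 0 ≤ a i) (hb : ∀ i ∈ s, 0 ≤ b i) (hab : ∀ i ∈ s, a i ≠ 0 → b i ≠ 0)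
    (hsum : ∑ i ∈ s, b i ≤ ∑ i ∈ s, a i) : ∑ i ∈ s, a i * logb c (b i / a i) ≤ 0 := by
  have term_le : ∀ i ∈ s, a i * log (b i / a i) ≤ b i - a i := by
    intro i hi
    rcases (ha i hi).eq_or_lt with h0 | hapos
    · simpa [← h0] using hb i hi
    have hbpos : 0 < b i := (hb i hi).lt_of_ne' (hab i hi hapos.ne')
    calc a i * log (b i / a i) ≤ a i * (b i / a i - 1) := by
          gcongr; exact log_le_sub_one_of_pos (by positivity)
      _ = b i - a i := by field_simp
  calc ∑ i ∈ s, a i * logb c (b i / a i) = (∑ i ∈ s, a i * log (b i / a i)) / log c := by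
        simp_rw [logb, Finset.sum_div, mul_div_assoc]
    _ ≤ 0 := div_nonpos_of_nonpos_of_nonneg
        ((sum_le_sum term_le).trans (by rw [sum_sub_distrib]; linarith)) (log_pos hc).le

variable {α β : Type*} [Fintype α] [Fintype β] {b : ℝ} {p : α → ℝ} {K : α → β → ℝ}

theorem sum_sum_mul_eq_one (hp : p ∈ stdSimplex ℝ α) (hK : ∀ x, K x ∈ stdSimplex ℝ β) :
    ∑ x, ∑ y, p x * K x y = 1 := by
  simp_rw [← mul_sum, (hK _).2, mul_one, hp.2]

theorem mul_le_sum_mul (hp : p ∈ stdSimplex ℝ α) (hK : ∀ x, K x ∈ stdSimplex ℝ β) (x : α)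
    (y : β) : p x * K x y ≤ ∑ x', p x' * K x' y :=
  single_le_sum (f := fun x' => p x' * K x' y) (fun x' _ => mul_nonneg (hp.1 x') ((hK x').1 y))
    (mem_univ x)

theorem mutualInfoB_le_logb (hb : 1 < b) (hp : p ∈ stdSimplex ℝ α)
    (hK : ∀ x, K x ∈ stdSimplex ℝ β) {Q : β → ℝ} (hQ : ∀ y, 0 ≤ Q y) (hQ1 : ∑ y, Q y ≤ 1) {M : ℝ}
    (hM : 0 < M) (hKM : ∀ x y, K x y ≤ M * Q y) : mutualInfoB b p K ≤ logb b M := by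
  set S : β → ℝ := fun y => ∑ x, p x * K x y
  have hpK x y : 0 ≤ p x * K x y := mul_nonneg (hp.1 x) ((hK x).1 y)
  have hQpos {x y} (h : p x * K x y ≠ 0) : 0 < Q y :=
    pos_of_mul_pos_right (((hK x).1 y).lt_of_ne' (right_ne_zero_of_mul h) |>.trans_le (hKM x y))
      hM.le
  have hSsum : ∑ y, S y = 1 := by rw [sum_comm, sum_sum_mul_eq_one hp hK]
  have gibbs : ∑ y, S y * logb b (Q y / S y) ≤ 0 := by
    refine sum_mul_logb_div_nonpos hb (fun y _ => sum_nonneg fun x _ => hpK x y)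
      (fun y _ => hQ y) (fun y _ hy => ?_) (hQ1.trans_eq hSsum.symm)
    obtain ⟨x, -, hx⟩ := exists_ne_zero_of_sum_ne_zero hy
    exact (hQpos hx).ne'
  have term_le x y : p x * K x y * logb b (K x y / S y) ≤
      p x * K x y * logb b M + p x * K x y * logb b (Q y / S y) := by
    rcases (hpK x y).eq_or_lt with h0 | hpos
    · simp [← h0]
    have hKpos : 0 < K x y := pos_of_mul_pos_right hpos (hp.1 x)
    have hSpos : 0 < S y := hpos.trans_le (mul_le_sum_mul hp hK x y)
    have hQy : 0 < Q y := hQpos hpos.ne'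
    rw [← mul_add, ← logb_mul hM.ne' (by positivity), ← mul_div_assoc]
    gcongr
    exact hKM x y
  calc mutualInfoB b p K
      ≤ ∑ x, ∑ y, (p x * K x y * logb b M + p x * K x y * logb b (Q y / S y)) :=
        sum_le_sum fun x _ => sum_le_sum fun y _ => term_le x y
    _ = logb b M + ∑ y, S y * logb b (Q y / S y) := by
        simp_rw [sum_add_distrib, ← sum_mul, sum_sum_mul_eq_one hp hK, one_mul]
        rw [sum_comm]
        simp_rw [← sum_mul, S]
    _ ≤ logb b M := by linarith

-- `V x y` plays the role of a guess, made from the output `y`, of the posterior law of the input.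
theorem sum_sum_mul_logb_div_le_mutualInfoB (hb : 1 < b) (hp : p ∈ stdSimplex ℝ α)
    (hK : ∀ x, K x ∈ stdSimplex ℝ β) {V : α → β → ℝ} (hV : ∀ x y, 0 ≤ V x y)
    (hV1 : ∀ y, ∑ x, V x y ≤ 1) (hpV : ∀ x y, p x ≠ 0 → V x y ≠ 0) :
    ∑ x, ∑ y, p x * K x y * logb b (V x y / p x) ≤ mutualInfoB b p K := by
  set S : β → ℝ := fun y => ∑ x, p x * K x y
  have hpK x y : 0 ≤ p x * K x y := mul_nonneg (hp.1 x) ((hK x).1 y)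
  have hS y : 0 ≤ S y := sum_nonneg fun x _ => hpK x y
  have hSpos {x y} (h : p x * K x y ≠ 0) : 0 < S y :=
    ((hpK x y).lt_of_ne' h).trans_le (mul_le_sum_mul hp hK x y)
  have sum_VS_le : ∑ x, ∑ y, V x y * S y ≤ ∑ x, ∑ y, p x * K x y := by
    rw [sum_comm, sum_comm (f := fun x y => p x * K x y)]
    refine sum_le_sum fun y _ => ?_
    rw [← sum_mul]
    exact mul_le_of_le_one_left (hS y) (hV1 y)
  have gibbs : ∑ x, ∑ y, p x * K x y * logb b (V x y * S y / (p x * K x y)) ≤ 0 := by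
    rw [← Fintype.sum_prod_type'] at sum_VS_le ⊢
    rw [← Fintype.sum_prod_type'] at sum_VS_le
    exact sum_mul_logb_div_nonpos hb (fun z _ => hpK z.1 z.2)
      (fun z _ => mul_nonneg (hV z.1 z.2) (hS z.2))
      (fun z _ hz => mul_ne_zero (hpV _ _ (left_ne_zero_of_mul hz)) (hSpos hz).ne') sum_VS_le
  have term_eq x y : p x * K x y * logb b (V x y / p x) =
      p x * K x y * logb b (K x y / S y) +
        p x * K x y * logb b (V x y * S y / (p x * K x y)) := by
    rcases eq_or_ne (p x * K x y) 0 with h0 | hne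
    · simp [h0]
    have hp0 : p x ≠ 0 := left_ne_zero_of_mul hne
    have hK0 : K x y ≠ 0 := right_ne_zero_of_mul hne
    have hS0 : S y ≠ 0 := (hSpos hne).ne'
    have hV0 : V x y ≠ 0 := hpV x y hp0
    rw [← mul_add, ← logb_mul (by positivity) (by positivity)]
    congr 2
    field_simp
  simp_rw [term_eq, sum_add_distrib]
  exact add_le_of_nonpos_right gibbs

theorem capacityB_le [Nonempty α] {c : ℝ} (h : ∀ p ∈ stdSimplex ℝ α, mutualInfoB b p K ≤ c) :
    capacityB b K ≤ c := by
  classical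
  obtain ⟨x⟩ := ‹Nonempty α›
  have hx := single_mem_stdSimplex ℝ x
  refine csSup_le ⟨_, _, hx.1, hx.2, rfl⟩ ?_
  rintro _ ⟨p, hp, hp1, rfl⟩
  exact h p ⟨hp, hp1⟩

theorem mutualInfoB_le_capacityB (hb : 1 < b) (hp : p ∈ stdSimplex ℝ α)
    (hK : ∀ x, K x ∈ stdSimplex ℝ β) : mutualInfoB b p K ≤ capacityB b K := by
  refine le_csSup ⟨logb b (Fintype.card β), ?_⟩ ⟨p, hp.1, hp.2, rfl⟩
  rintro _ ⟨p', hp', hp1', rfl⟩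
  obtain ⟨x, -, -⟩ := exists_ne_zero_of_sum_ne_zero (hp1'.trans_ne one_ne_zero)
  obtain ⟨y, -, -⟩ := exists_ne_zero_of_sum_ne_zero ((hK x).2.trans_ne one_ne_zero)
  have hβ : (0 : ℝ) < Fintype.card β := by exact_mod_cast Fintype.card_pos_iff.2 ⟨y⟩
  refine mutualInfoB_le_logb hb ⟨hp', hp1'⟩ hK (Q := fun _ => (Fintype.card β : ℝ)⁻¹)
    (fun _ => by positivity) (by simp [hβ.ne']) hβ fun x y => ?_
  rw [mul_inv_cancel₀ hβ.ne', ← (hK x).2]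
  exact single_le_sum (fun y _ => (hK x).1 y) (mem_univ y)

theorem ite_mem_inv_card_mem_stdSimplex [DecidableEq α] {S : Finset α} (hS : S.Nonempty) :
    (fun x => if x ∈ S then (#S : ℝ)⁻¹ else 0) ∈ stdSimplex ℝ α := by
  have hS0 : (#S : ℝ) ≠ 0 := by exact_mod_cast hS.card_pos.ne'
  refine ⟨fun x => by positivity, ?_⟩
  simp [sum_ite_mem, hS0]

theorem mul_logb_sub_logb_two_le_mutualInfoB (hb : 1 < b) (hp : p ∈ stdSimplex ℝ α)
    (hK : ∀ x, K x ∈ stdSimplex ℝ β) {V : α → β → ℝ} (hV1 : ∀ y, ∑ x, V x y ≤ 1)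
    {G : α → Finset β} {M P : ℝ} (hM : 1 ≤ M) (hpV : ∀ x y, p x / 2 ≤ V x y)
    (hGV : ∀ x, p x ≠ 0 → ∀ y ∈ G x, p x * (M / 2) ≤ V x y)
    (hP : ∀ x, p x ≠ 0 → P ≤ ∑ y ∈ G x, K x y) :
    P * logb b M - logb b 2 ≤ mutualInfoB b p K := by
  classical
  have hlog : 0 ≤ logb b M := logb_nonneg hb hM
  have logb_le x y (hx : 0 < p x) :
      (if y ∈ G x then logb b M else 0) - logb b 2 ≤ logb b (V x y / p x) := by
    split_ifs with hy
    · rw [← logb_div (by positivity) two_ne_zero]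
      refine logb_le_logb_of_le hb (by positivity) ?_
      rw [le_div_iff₀' hx]
      exact hGV x hx.ne' y hy
    · rw [zero_sub, ← logb_inv]
      refine logb_le_logb_of_le hb (by positivity) ?_
      rw [le_div_iff₀' hx]
      exact hpV x y
  have row_le x : p x * (P * logb b M - logb b 2) ≤
      ∑ y, p x * K x y * logb b (V x y / p x) := by
    rcases (hp.1 x).eq_or_lt with h0 | hx
    · simp [← h0]
    calc p x * (P * logb b M - logb b 2)
        ≤ p x * ((∑ y ∈ G x, K x y) * logb b M - logb b 2) := by gcongr; exact hP x hx.ne'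
      _ = ∑ y, p x * K x y * ((if y ∈ G x then logb b M else 0) - logb b 2) := by
        simp_rw [mul_assoc, ← mul_sum, mul_sub, sum_sub_distrib, ← sum_mul, (hK x).2, one_mul,
          mul_ite, mul_zero, sum_ite_mem, univ_inter, ← sum_mul]
        ring
      _ ≤ ∑ y, p x * K x y * logb b (V x y / p x) := by
        gcongr with y
        · exact mul_nonneg hx.le ((hK x).1 y)
        · exact logb_le x y hx
  calc P * logb b M - logb b 2 = ∑ x, p x * (P * logb b M - logb b 2) := by
        rw [← sum_mul, hp.2, one_mul]
    _ ≤ ∑ x, ∑ y, p x * K x y * logb b (V x y / p x) := sum_le_sum fun x _ => row_le x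
    _ ≤ mutualInfoB b p K :=
        sum_sum_mul_logb_div_le_mutualInfoB hb hp hK
          (fun x y => (div_nonneg (hp.1 x) zero_le_two).trans (hpV x y)) hV1
          fun x y hx => (half_pos ((hp.1 x).lt_of_ne' hx) |>.trans_le (hpV x y)).ne'

-- Fano's inequality for a list decoder: the guess at the codeword is uniform on the list `L y`
-- with probability `1 / 2` and uniform on the codebook `S` otherwise.
theorem mul_logb_sub_logb_two_le_capacityB [DecidableEq α] (hb : 1 < b)
    (hK : ∀ x, K x ∈ stdSimplex ℝ β) {S : Finset α} {L : β → Finset α} {ℓ : ℕ} {P : ℝ}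
    (hℓ : 0 < ℓ) (hℓS : ℓ ≤ #S) (hL : ∀ y, #(L y) ≤ ℓ)
    (hP : ∀ x ∈ S, P ≤ ∑ y with x ∈ L y, K x y) :
    P * logb b (#S / ℓ) - logb b 2 ≤ capacityB b K := by
  set p : α → ℝ := fun x => if x ∈ S then (#S : ℝ)⁻¹ else 0
  have hS : 0 < #S := hℓ.trans_le hℓS
  have hp : p ∈ stdSimplex ℝ α := ite_mem_inv_card_mem_stdSimplex (card_pos.1 hS)
  have mem_S {x} (hx : p x ≠ 0) : x ∈ S := of_not_not fun h => hx (if_neg h)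
  refine (mul_logb_sub_logb_two_le_mutualInfoB hb hp hK
    (V := fun x y => p x / 2 + if x ∈ L y then (ℓ : ℝ)⁻¹ / 2 else 0) (G := fun x => {y | x ∈ L y})
    (fun y => ?_) ?_ (fun x y => ?_) (fun x hx y hy => ?_) fun x hx => hP x (mem_S hx)).trans
    (mutualInfoB_le_capacityB hb hp hK)
  · have list_le : (#(L y) : ℝ) / ℓ ≤ 1 :=
      div_le_one_of_le₀ (by exact_mod_cast hL y) (by positivity)
    calc _ = 1 / 2 + (#(L y) : ℝ) / ℓ / 2 := by
          simp_rw [sum_add_distrib, ← sum_div, hp.2, sum_ite_mem, univ_inter, sum_const,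
            nsmul_eq_mul]
          ring
      _ ≤ 1 := by linarith
  · rw [one_le_div (by positivity)]
    exact_mod_cast hℓS
  · exact le_add_of_nonneg_right (by positivity)
  · have hxL : x ∈ L y := (mem_filter.1 hy).2
    simp only [p, if_pos (mem_S hx), if_pos hxL]
    calc _ = (ℓ : ℝ)⁻¹ / 2 := by field_simp
      _ ≤ _ := le_add_of_nonneg_left (by positivity)

end MutualInformation

section LinearAlgebra

variable {F V : Type*} [Field F] [AddCommGroup V] [Module F V]

theorem exists_linearEquiv_apply_eq [FiniteDimensional F V] {v w : V} (hv : v ≠ 0) (hw : w ≠ 0) :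
    ∃ e : V ≃ₗ[F] V, e v = w := by
  obtain ⟨e, he⟩ := Submodule.exists_linearEquiv_restrict_eq
    ((LinearEquiv.toSpanNonzeroSingleton F V v hv).symm ≪≫ₗ
      LinearEquiv.toSpanNonzeroSingleton F V w hw)
  have span_v : ⟨v, Submodule.mem_span_singleton_self v⟩ =
      LinearEquiv.toSpanNonzeroSingleton F V v hv 1 := by
    ext; simp
  refine ⟨e, (he ⟨v, Submodule.mem_span_singleton_self v⟩).symm.trans ?_⟩
  rw [span_v, LinearEquiv.trans_apply, LinearEquiv.symm_apply_apply]
  simp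

theorem exists_forall_apply_eq_of_disjoint {E R : Submodule F V} (h : Disjoint E R) :
    ∃ f : V →ₗ[F] V, (∀ v, f v ∈ E) ∧ (∀ v ∈ E, f v = v) ∧ ∀ v ∈ R, f v = 0 := by
  obtain ⟨R', hR, hE⟩ := h.symm.exists_isCompl
  exact ⟨_, fun v => Submodule.projection_apply_mem hE.symm v, fun v hv =>
    Submodule.projection_apply_of_mem_left hE.symm hv, fun v hv =>
    (Submodule.projection_apply_eq_zero_iff hE.symm).2 (hR hv)⟩

theorem exists_finset_forall_mem_span {ι : Type*} [Finite ι] (v : ι → V) :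
    ∃ J : Finset ι, #J = finrank F (Submodule.span F (Set.range v)) ∧
      ∀ i, v i ∈ Submodule.span F (Set.range fun j : J => v j) := by
  classical
  obtain ⟨κ, a, ha, hspan, hli⟩ := exists_linearIndependent' F v
  have := Finite.of_injective a ha
  have := Fintype.ofFinite κ
  refine ⟨univ.image a, ?_, fun i => ?_⟩
  · rw [card_image_of_injective _ ha, ← hspan, finrank_span_eq_card hli, card_univ]
  · refine Submodule.span_mono ?_ (hspan ▸ Submodule.subset_span ⟨i, rfl⟩ :
      v i ∈ Submodule.span F (Set.range (v ∘ a)))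
    rintro _ ⟨k, rfl⟩
    exact ⟨⟨a k, mem_image_of_mem a (mem_univ k)⟩, rfl⟩

theorem card_span_range_le [Finite F] {ι : Type*} [Fintype ι] (v : ι → V) :
    Nat.card (Submodule.span F (Set.range v)) ≤ Nat.card F ^ Fintype.card ι := by
  have := FiniteDimensional.span_of_finite F (Set.finite_range v)
  rw [natCard_eq_pow_finrank (K := F)]
  exact Nat.pow_le_pow_right Nat.card_pos (finrank_range_le_card v)

theorem card_forall_mem_span_le [Finite F] [Finite V] {ι : Type*} [Fintype ι] {A : ι → Finset V}
    {N : ℕ} (hA : ∀ i, #(A i) ≤ N) (J : Finset ι) :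
    Nat.card {w : ι → V // (∀ i, w i ∈ A i) ∧
      ∀ i, w i ∈ Submodule.span F (Set.range fun j : J => w j)} ≤
      N ^ #J * (Nat.card F ^ #J) ^ (Fintype.card ι - #J) := by
  classical
  cases nonempty_fintype V
  rw [Nat.card_eq_fintype_card, Fintype.card_subtype, mul_comm]
  have card_restrictions : #(Fintype.piFinset fun j : J => A j) ≤ N ^ #J := by
    rw [Fintype.card_piFinset]
    refine (prod_le_pow_card univ (fun j : J => #(A j)) N fun j _ => hA j).trans_eq ?_
    rw [card_univ, Fintype.card_coe]
  refine (card_le_mul_card_image_of_maps_to (f := fun w (j : J) => w j)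
    (t := Fintype.piFinset fun j : J => A j) (fun w hw => ?_) _ fun f _ => ?_).trans
    (Nat.mul_le_mul_left _ card_restrictions)
  · exact Fintype.mem_piFinset.2 fun j => (mem_filter.1 hw).2.1 j
  let values (i : ι) : Finset V :=
    if h : i ∈ J then {f ⟨i, h⟩} else univ.filter (· ∈ Submodule.span F (Set.range f))
  have card_values i : #(values i) ≤ if i ∈ J then 1 else Nat.card F ^ #J := by
    by_cases h : i ∈ J
    · simp [values, h]
    · rw [if_neg h, ← Fintype.card_coe J]
      refine le_trans (le_of_eq ?_) (card_span_range_le f)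
      simp only [values, dif_neg h]
      rw [← Fintype.card_subtype, ← Nat.card_eq_fintype_card]
  calc _ ≤ #(Fintype.piFinset values) := by
        refine card_le_card fun w hw => Fintype.mem_piFinset.2 fun i => ?_
        obtain ⟨hwS, rfl⟩ := mem_filter.1 hw
        by_cases h : i ∈ J
        · simp [values, h]
        · simpa [values, h] using (mem_filter.1 hwS).2.2 i
    _ ≤ ∏ i, if i ∈ J then 1 else Nat.card F ^ #J := by
        rw [Fintype.card_piFinset]
        exact prod_le_prod' fun i _ => card_values i
    _ = (Nat.card F ^ #J) ^ (Fintype.card ι - #J) := by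
        rw [prod_ite, prod_const_one, one_mul, prod_const, ← card_compl]
        congr 2
        ext; simp

theorem card_finrank_span_range_eq_le [Finite F] [Finite V] {ι : Type*} [Fintype ι]
    {A : ι → Finset V} {N : ℕ} (hA : ∀ i, #(A i) ≤ N) (t : ℕ) :
    Nat.card {w : ι → V // (∀ i, w i ∈ A i) ∧ finrank F (Submodule.span F (Set.range w)) = t} ≤
      2 ^ Fintype.card ι * (N ^ t * (Nat.card F ^ t) ^ (Fintype.card ι - t)) := by
  classical
  cases nonempty_fintype V
  calc _ ≤ #((powersetCard t univ).biUnion fun J : Finset ι => {w : ι → V | (∀ i, w i ∈ A i) ∧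
          ∀ i, w i ∈ Submodule.span F (Set.range fun j : J => w j)}) := by
        rw [Nat.card_eq_fintype_card, Fintype.card_subtype]
        refine card_le_card fun w hw => ?_
        obtain ⟨-, hwA, hwt⟩ := mem_filter.1 hw
        obtain ⟨J, hJ, hspan⟩ := exists_finset_forall_mem_span (F := F) w
        exact mem_biUnion.2 ⟨J, mem_powersetCard.2 ⟨subset_univ J, hJ.trans hwt⟩,
          mem_filter.2 ⟨mem_univ w, hwA, hspan⟩⟩
    _ ≤ #(powersetCard t (univ : Finset ι)) *
          (N ^ t * (Nat.card F ^ t) ^ (Fintype.card ι - t)) := by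
        refine card_biUnion_le_card_mul _ _ _ fun J hJ => ?_
        rw [← (mem_powersetCard.1 hJ).2, ← Fintype.card_subtype, ← Nat.card_eq_fintype_card]
        exact card_forall_mem_span_le hA J
    _ ≤ _ := by
        gcongr
        rw [card_powersetCard]
        exact Nat.choose_le_two_pow _ _

theorem card_filter_erase_zero_mem [Fintype V] [DecidableEq V] (U : Submodule F V)
    [DecidablePred (· ∈ U)] : #{v ∈ univ.erase 0 | v ∈ U} = Nat.card U - 1 := by
  rw [filter_erase, card_erase_of_mem (by simp), ← Fintype.card_subtype,
    ← Nat.card_eq_fintype_card]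

-- Double counting of the pairs `(ω, c)` with `c ∈ R ω` nonzero, first over `V` and then over `E`:
-- each bad `ω` contributes at least `Nat.card F - 1` of the pairs over `E`.
theorem card_not_disjoint_mul_le [Finite F] [Finite V] {Ω : Type*} [Finite Ω]
    {R : Ω → Submodule F V} {t : ℕ} (hRt : ∀ ω, finrank F (R ω) = t)
    (hR : ∀ c d : V, c ≠ 0 → d ≠ 0 → Nat.card {ω // c ∈ R ω} = Nat.card {ω // d ∈ R ω})
    (E : Submodule F V) :
    Nat.card {ω // ¬ Disjoint (R ω) E} * (Nat.card F - 1) * (Nat.card V - 1) ≤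
      (Nat.card F ^ t - 1) * (Nat.card E - 1) * Nat.card Ω := by
  classical
  cases nonempty_fintype V
  cases nonempty_fintype Ω
  obtain ⟨N, hN⟩ : ∃ N, ∀ c : V, c ≠ 0 → #{ω | c ∈ R ω} = N := by
    by_cases! h : ∃ c : V, c ≠ 0
    · obtain ⟨c, hc⟩ := h
      refine ⟨Nat.card {ω // c ∈ R ω}, fun d hd => ?_⟩
      rw [hR c d hc hd, Nat.card_eq_fintype_card, Fintype.card_subtype]
    · exact ⟨0, fun c hc => absurd (h c) hc⟩
  have incidences : Nat.card Ω * (Nat.card F ^ t - 1) = (Nat.card V - 1) * N := by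
    have := card_mul_eq_card_mul (s := univ) (t := univ.erase 0) (fun ω (c : V) => c ∈ R ω)
      (fun ω _ => (card_filter_erase_zero_mem (R ω)).trans
        (by rw [natCard_eq_pow_finrank (K := F) (V := R ω), hRt ω]))
      (fun c hc => hN c (ne_of_mem_erase hc))
    rwa [card_erase_of_mem (mem_univ 0), card_univ, card_univ, ← Nat.card_eq_fintype_card,
      ← Nat.card_eq_fintype_card] at this
  have bad_incidences : Nat.card {ω // ¬ Disjoint (R ω) E} * (Nat.card F - 1) ≤
      (Nat.card E - 1) * N := by
    rw [Nat.card_eq_fintype_card, Fintype.card_subtype, ← card_filter_erase_zero_mem E]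
    refine card_mul_le_card_mul (fun ω (c : V) => c ∈ R ω) (fun ω hω => ?_) fun c hc => ?_
    · have card_F_le : Nat.card F ≤ Nat.card (E ⊓ R ω : Submodule F V) := by
        rw [natCard_eq_pow_finrank (K := F) (V := (E ⊓ R ω : Submodule F V))]
        refine Nat.le_self_pow (Nat.one_le_iff_ne_zero.1 (Submodule.one_le_finrank_iff.2 ?_)) _
        rw [inf_comm]
        exact fun h => (mem_filter.1 hω).2 (disjoint_iff.2 h)
      refine (Nat.sub_le_sub_right card_F_le 1).trans_eq ?_
      simp_rw [← card_filter_erase_zero_mem, bipartiteAbove, filter_filter, Submodule.mem_inf]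
    · rw [← hN c (ne_of_mem_erase (mem_filter.1 hc).1)]
      exact card_le_card (filter_subset_filter _ (subset_univ _))
  calc _ ≤ (Nat.card E - 1) * N * (Nat.card V - 1) := Nat.mul_le_mul_right _ bad_incidences
    _ = (Nat.card E - 1) * ((Nat.card V - 1) * N) := by ring
    _ = _ := by rw [← incidences]; ring

theorem card_not_disjoint_mul_card_le [Finite F] [Finite V] {Ω : Type*} [Finite Ω]
    {R : Ω → Submodule F V} {t : ℕ} (hRt : ∀ ω, finrank F (R ω) = t)
    (hR : ∀ c d : V, c ≠ 0 → d ≠ 0 → Nat.card {ω // c ∈ R ω} = Nat.card {ω // d ∈ R ω})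
    (E : Submodule F V) :
    Nat.card {ω // ¬ Disjoint (R ω) E} * (Nat.card F - 1) * Nat.card V ≤
      Nat.card F ^ t * Nat.card E * Nat.card Ω := by
  rcases subsingleton_or_nontrivial V with hV | hV
  · have : IsEmpty {ω // ¬ Disjoint (R ω) E} :=
      ⟨fun ω => ω.2 (by simp [Subsingleton.elim E ⊥])⟩
    simp
  have hV1 : 0 < Nat.card V - 1 := Nat.sub_pos_of_lt Finite.one_lt_card
  have card_E_le : (Nat.card E - 1) * Nat.card V ≤ Nat.card E * (Nat.card V - 1) := by
    rw [Nat.sub_mul, Nat.mul_sub, one_mul, mul_one]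
    exact Nat.sub_le_sub_left (Nat.card_le_card_of_injective _ E.injective_subtype) _
  refine Nat.le_of_mul_le_mul_right ?_ hV1
  calc _ = Nat.card {ω // ¬ Disjoint (R ω) E} * (Nat.card F - 1) * (Nat.card V - 1) *
        Nat.card V := by ring
    _ ≤ (Nat.card F ^ t - 1) * (Nat.card E - 1) * Nat.card Ω * Nat.card V :=
        Nat.mul_le_mul_right _ (card_not_disjoint_mul_le hRt hR E)
    _ = (Nat.card F ^ t - 1) * Nat.card Ω * ((Nat.card E - 1) * Nat.card V) := by ring
    _ ≤ Nat.card F ^ t * Nat.card Ω * (Nat.card E * (Nat.card V - 1)) := by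
        gcongr
        exact Nat.sub_le _ _
    _ = _ := by ring

end LinearAlgebra

section MatrixCounting

variable {F ι κ : Type*} [Field F] [Fintype F] [Fintype ι] [Fintype κ]

/-- The matrices of rank `r`, the alphabet of the additive noise. -/
abbrev FixedRankMatrix (ι κ F : Type*) [Fintype κ] [Field F] (r : ℕ) : Type _ :=
  {W : Matrix ι κ F // W.rank = r}

theorem card_forall_add_mem_le (X : Matrix ι κ F) (U : Submodule F (κ → F)) (t : ℕ) :
    Nat.card {W : FixedRankMatrix ι κ F t // ∀ i, X i + W.1 i ∈ U} ≤
      2 ^ Fintype.card ι *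
        ((Fintype.card F ^ finrank F U) ^ t * (Fintype.card F ^ t) ^ (Fintype.card ι - t)) := by
  classical
  rw [← Nat.card_eq_fintype_card (α := F)]
  have card_translate i : #{w : κ → F | X i + w ∈ U} ≤ Nat.card F ^ finrank F U := by
    rw [← natCard_eq_pow_finrank (K := F), ← Fintype.card_subtype, ← Nat.card_eq_fintype_card]
    exact Nat.card_le_card_of_injective (fun w => (⟨X i + w.1, w.2⟩ : U)) fun w w' h =>
      Subtype.ext (add_left_cancel (congrArg Subtype.val h))
  refine le_trans ?_ (card_finrank_span_range_eq_le (F := F) card_translate t)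
  refine Nat.card_le_card_of_injective (fun W => ⟨W.1.1, fun i => ?_, ?_⟩) fun W W' h =>
    Subtype.ext (Subtype.ext (Subtype.mk.inj h))
  · simpa using W.2 i
  · exact (W.1.1.rank_eq_finrank_span_row).symm.trans W.1.2

theorem card_fixedRankMatrix_le (r : ℕ) :
    Nat.card (FixedRankMatrix ι κ F r) ≤ 2 ^ Fintype.card ι *
      ((Fintype.card F ^ Fintype.card κ) ^ r * (Fintype.card F ^ r) ^ (Fintype.card ι - r)) := by
  have h := card_forall_add_mem_le (0 : Matrix ι κ F) ⊤ r
  rwa [Nat.card_congr (Equiv.subtypeUnivEquiv fun _ _ => Submodule.mem_top), finrank_top,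
    finrank_fintype_fun_eq_card] at h

theorem card_mul_eq_le [DecidableEq ι] (Z Y : Matrix ι κ F) :
    Nat.card {A : GL ι F // A.1 * Z = Y} ≤
      (Fintype.card F ^ (Fintype.card ι - Z.rank)) ^ Fintype.card ι := by
  have card_ker : Nat.card (LinearMap.ker Z.vecMulLinear) =
      Fintype.card F ^ (Fintype.card ι - Z.rank) := by
    have h := LinearMap.finrank_range_add_finrank_ker Z.vecMulLinear
    rw [range_vecMulLinear, ← Z.rank_eq_finrank_span_row, finrank_fintype_fun_eq_card] at h
    rw [natCard_eq_pow_finrank (K := F), Nat.card_eq_fintype_card, ← h, Nat.add_sub_cancel_left]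
  rcases isEmpty_or_nonempty {A : GL ι F // A.1 * Z = Y} with hA | ⟨⟨A₀, hA₀⟩⟩
  · simp
  calc _ ≤ Nat.card (ι → LinearMap.ker Z.vecMulLinear) := by
        refine Nat.card_le_card_of_injective (fun A i => ⟨(A.1.1 - A₀.1) i, ?_⟩) fun A A' h => ?_
        · have h : (A.1.1 - A₀.1) * Z = 0 := by rw [Matrix.sub_mul, A.2, hA₀, sub_self]
          exact congrFun h i
        · have hsub : A.1.1 - A₀.1 = A'.1.1 - A₀.1 :=
            funext fun i => congrArg Subtype.val (congrFun h i)
          exact Subtype.ext (Units.ext (sub_left_injective hsub))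
    _ = _ := by rw [Nat.card_fun, card_ker, Nat.card_eq_fintype_card]

theorem pow_mul_le_two_pow_mul_prod {q : ℕ} (hq : 2 ≤ q) {t m : ℕ} (ht : t ≤ m) :
    (q ^ m) ^ t ≤ 2 ^ t * ∏ i : Fin t, (q ^ m - q ^ (i : ℕ)) := by
  calc (q ^ m) ^ t = ∏ _i : Fin t, q ^ m := by simp
    _ ≤ ∏ i : Fin t, 2 * (q ^ m - q ^ (i : ℕ)) := by
      refine prod_le_prod' fun i _ => ?_
      have h : q ^ (i : ℕ) * 2 ≤ q ^ m :=
        calc q ^ (i : ℕ) * 2 ≤ q ^ (i + 1 : ℕ) := by rw [pow_succ]; gcongr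
          _ ≤ q ^ m := Nat.pow_le_pow_right (by lia) (by lia)
      lia
    _ = _ := by simp [prod_mul_distrib]

theorem pow_le_two_pow_mul_card_GL (F : Type*) [Field F] [Fintype F] (n : ℕ) :
    (Fintype.card F ^ n) ^ n ≤ 2 ^ n * Nat.card (GL (Fin n) F) := by
  rw [Matrix.card_GL_field]
  exact pow_mul_le_two_pow_mul_prod Fintype.one_lt_card le_rfl

omit [Fintype F] in
theorem rank_fromRows_mul {ι' : Type*} [Finite ι'] (S : Matrix ι κ F) (Z : Matrix ι' ι F) :
    (fromRows S (Z * S)).rank = S.rank := by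
  classical
  cases nonempty_fintype ι'
  apply le_antisymm
  · calc _ = (fromRows (1 : Matrix ι ι F) Z * S).rank := by rw [fromRows_mul, Matrix.one_mul]
      _ ≤ S.rank := rank_mul_le_right _ _
  · calc S.rank = (fromCols (1 : Matrix ι ι F) (0 : Matrix ι ι' F) * fromRows S (Z * S)).rank := by
          rw [fromCols_mul_fromRows, Matrix.one_mul, Matrix.zero_mul, add_zero]
      _ ≤ _ := rank_mul_le_right _ _

theorem card_linearIndependent_mul_le {ι' ν : Type*} [Fintype ι'] [Finite ν] (e : ν ≃ ι ⊕ ι') :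
    Nat.card {S : Matrix ι κ F // LinearIndependent F S} *
      (Fintype.card F ^ Fintype.card ι) ^ Fintype.card ι' ≤
      Nat.card (FixedRankMatrix ν κ F (Fintype.card ι)) := by
  have card_Z : (Fintype.card F ^ Fintype.card ι) ^ Fintype.card ι' =
      Nat.card (Matrix ι' ι F) := by
    rw [Matrix, Nat.card_fun, Nat.card_fun, Nat.card_eq_fintype_card, Nat.card_eq_fintype_card,
      Nat.card_eq_fintype_card]
  rw [card_Z, ← Nat.card_prod]
  refine Nat.card_le_card_of_injective (fun p => ⟨(fromRows p.1.1 (p.2 * p.1.1)).submatrix e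
    (Equiv.refl κ), ?_⟩) ?_
  · rw [rank_submatrix, rank_fromRows_mul]
    exact p.1.2.rank_matrix
  · rintro ⟨⟨S, hS⟩, Z⟩ ⟨⟨S', _⟩, Z'⟩ h
    have h : fromRows S (Z * S) = fromRows S' (Z' * S') :=
      (Matrix.reindex e.symm (Equiv.refl κ)).injective (congrArg Subtype.val h)
    obtain ⟨rfl, hZ⟩ := fromRows_inj h
    obtain rfl : Z = Z' := funext fun i =>
      vecMul_injective_iff.2 hS (congrFun hZ i)
    rfl

theorem pow_mul_pow_le_card_fixedRankMatrix (F : Type*) [Field F] [Fintype F] {n m t : ℕ}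
    (htn : t ≤ n) (htm : t ≤ m) :
    (Fintype.card F ^ m) ^ t * (Fintype.card F ^ t) ^ (n - t) ≤
      2 ^ t * Nat.card (FixedRankMatrix (Fin n) (Fin m) F t) := by
  have card_li : Nat.card {S : Matrix (Fin t) (Fin m) F // LinearIndependent F S} =
      ∏ i : Fin t, (Fintype.card F ^ m - Fintype.card F ^ (i : ℕ)) := by
    have h := card_linearIndependent (K := F) (V := Fin m → F) (k := t) (by simpa using htm)
    rwa [finrank_fin_fun] at h
  have h := card_linearIndependent_mul_le (F := F) (κ := Fin m)
    ((finSumFinEquiv (m := t) (n := n - t)).trans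
      (finCongr (Nat.add_sub_of_le htn))).symm
  rw [Fintype.card_fin, Fintype.card_fin, card_li] at h
  calc _ ≤ 2 ^ t * (∏ i : Fin t, (Fintype.card F ^ m - Fintype.card F ^ (i : ℕ))) *
        (Fintype.card F ^ t) ^ (n - t) :=
        Nat.mul_le_mul_right _ (pow_mul_le_two_pow_mul_prod Fintype.one_lt_card htm)
    _ ≤ _ := by rw [mul_assoc]; exact Nat.mul_le_mul_left _ h

theorem card_fixedRankMatrix_pos (F : Type*) [Field F] [Finite F] {n m t : ℕ} (htn : t ≤ n)
    (htm : t ≤ m) : 0 < Nat.card (FixedRankMatrix (Fin n) (Fin m) F t) := by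
  cases nonempty_fintype F
  have h := pow_mul_pow_le_card_fixedRankMatrix F htn htm
  have : 0 < Fintype.card F := Fintype.card_pos
  exact Nat.pos_of_mul_pos_left (h.trans_lt' (by positivity))

omit [Fintype F] [Fintype ι] in
theorem card_fixedRankMatrix_mem_range_le [Finite F] [Finite ι] (t : ℕ) {c d : ι → F} (hc : c ≠ 0)
    (hd : d ≠ 0) :
    Nat.card {W : FixedRankMatrix ι κ F t // c ∈ LinearMap.range W.1.mulVecLin} ≤
      Nat.card {W : FixedRankMatrix ι κ F t // d ∈ LinearMap.range W.1.mulVecLin} := by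
  classical
  cases nonempty_fintype ι
  obtain ⟨e, he⟩ := exists_linearEquiv_apply_eq (F := F) hc hd
  let G := LinearMap.toMatrix' e.toLinearMap
  have isUnit_det_G : IsUnit G.det := by
    rw [LinearMap.det_toMatrix']
    exact e.isUnit_det'
  have G_mulVec_c : G *ᵥ c = d := by rw [LinearMap.toMatrix'_mulVec]; exact he
  refine Nat.card_le_card_of_injective (fun W => ⟨⟨G * W.1.1, ?_⟩, ?_⟩) fun W W' h => ?_
  · rw [rank_mul_eq_right_of_isUnit_det G _ isUnit_det_G, W.1.2]
  · obtain ⟨u, hu⟩ := W.2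
    exact ⟨u, by rw [mulVecLin_apply, ← mulVec_mulVec, ← mulVecLin_apply W.1.1, hu, G_mulVec_c]⟩
  · have := invertibleOfIsUnitDet G isUnit_det_G
    exact Subtype.ext (Subtype.ext (mul_right_injective_of_invertible G
      (Subtype.mk.inj (Subtype.mk.inj h))))

theorem card_not_disjoint_range_mul_le (E : Submodule F (ι → F)) (t : ℕ) :
    Nat.card {W : FixedRankMatrix ι κ F t // ¬ Disjoint (LinearMap.range W.1.mulVecLin) E} *
      (Fintype.card F - 1) * Fintype.card F ^ Fintype.card ι ≤
      Fintype.card F ^ t * Nat.card E * Nat.card (FixedRankMatrix ι κ F t) := by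
  classical
  have h := card_not_disjoint_mul_card_le (F := F)
    (R := fun W : FixedRankMatrix ι κ F t => LinearMap.range W.1.mulVecLin) (fun W => W.2)
    (fun _ _ hc hd => le_antisymm (card_fixedRankMatrix_mem_range_le t hc hd)
      (card_fixedRankMatrix_mem_range_le t hd hc)) E
  rwa [Nat.card_fun, Nat.card_eq_fintype_card (α := F), Nat.card_eq_fintype_card (α := ι)] at h

end MatrixCounting

section Fibres

theorem sum_inv_card_fiber_le {β γ : Type*} [Fintype β] {f : β → γ} {s : Finset γ}
    (hf : ∀ y, f y ∈ s) : ∑ y, (Nat.card {y' // f y' = f y} : ℝ)⁻¹ ≤ #s := by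
  classical
  rw [← sum_fiberwise_of_maps_to fun y _ => hf y, ← nsmul_one #s]
  refine sum_le_card_nsmul _ _ _ fun c _ => ?_
  have sum_fiber : ∑ y with f y = c, (Nat.card {y' // f y' = f y} : ℝ)⁻¹ =
      ∑ y with f y = c, (#{y' | f y' = c} : ℝ)⁻¹ := by
    refine sum_congr rfl fun y hy => ?_
    rw [(mem_filter.1 hy).2, Nat.card_eq_fintype_card, Fintype.card_subtype]
  rw [sum_fiber, sum_const, nsmul_eq_mul]
  exact mul_inv_le_one

theorem card_mul_add_eq_le {F ι κ : Type*} [Field F] [Fintype F] [Fintype ι] [Fintype κ]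
    [DecidableEq ι] (X Y : Matrix ι κ F) (t : ℕ) :
    Nat.card {p : GL ι F × FixedRankMatrix ι κ F t // p.1.1 * (X + p.2.1) = Y} ≤
      2 ^ Fintype.card ι *
        ((Fintype.card F ^ Y.rank) ^ t * (Fintype.card F ^ t) ^ (Fintype.card ι - t)) *
        (Fintype.card F ^ (Fintype.card ι - Y.rank)) ^ Fintype.card ι := by
  classical
  let U := LinearMap.range Y.vecMulLinear
  have finrank_U : finrank F U = Y.rank := by
    rw [show U = _ from range_vecMulLinear Y, Y.rank_eq_finrank_span_row]
  have card_A_le (W : FixedRankMatrix ι κ F t) :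
      Nat.card {A : GL ι F // A.1 * (X + W.1) = Y} ≤
        (Fintype.card F ^ (Fintype.card ι - Y.rank)) ^ Fintype.card ι := by
    rcases isEmpty_or_nonempty {A : GL ι F // A.1 * (X + W.1) = Y} with _ | ⟨⟨A, rfl⟩⟩
    · simp
    · rw [rank_mul_eq_right_of_isUnit_det A.1 _ ((isUnit_iff_isUnit_det _).1 A.isUnit)]
      exact card_mul_eq_le _ _
  have mem_U (A : GL ι F) (W : Matrix ι κ F) (h : A.1 * (X + W) = Y) i : X i + W i ∈ U := by
    have : X + W = A⁻¹.1 * Y := by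
      rw [← h, ← Matrix.mul_assoc, ← Units.val_mul, inv_mul_cancel, Units.val_one, Matrix.one_mul]
    exact ⟨A⁻¹.1 i, by rw [vecMulLinear_apply, ← mul_apply_eq_vecMul, ← this]; rfl⟩
  calc _ ≤ Nat.card (Σ W : {W : FixedRankMatrix ι κ F t // ∀ i, X i + W.1 i ∈ U},
          {A : GL ι F // A.1 * (X + W.1.1) = Y}) := by
        refine Nat.card_le_card_of_injective
          (fun p => ⟨⟨p.1.2, mem_U p.1.1 p.1.2.1 p.2⟩, ⟨p.1.1, p.2⟩⟩) fun p p' h => ?_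
        exact Subtype.ext (congrArg (fun s => (s.2.1, s.1.1)) h)
    _ ≤ _ := by
        rw [Nat.card_sigma, ← finrank_U]
        refine (sum_le_card_nsmul univ _ _ fun W _ => card_A_le W.1).trans ?_
        rw [smul_eq_mul, card_univ, ← Nat.card_eq_fintype_card, finrank_U]
        gcongr
        rw [← finrank_U]
        exact card_forall_add_mem_le X U t

end Fibres

section Decoding

variable {F ι κ : Type*} [Field F] [Fintype ι]

/-- The coordinate subspace of the vectors that vanish on `J`. -/
def vanishingOn (F : Type*) {ι : Type*} [Field F] (J : Finset ι) : Submodule F (ι → F) :=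
  Submodule.pi J fun _ => ⊥

omit [Fintype ι] in
theorem mem_vanishingOn {J : Finset ι} {x : ι → F} : x ∈ vanishingOn F J ↔ ∀ i ∈ J, x i = 0 := by
  simp [vanishingOn, Submodule.mem_pi]

theorem card_forall_mem_eq_zero {V : Type*} [Zero V] [Finite V] (J : Finset ι) :
    Nat.card {x : ι → V // ∀ i ∈ J, x i = 0} = Nat.card V ^ (Fintype.card ι - #J) := by
  classical
  cases nonempty_fintype V
  have mem_piFinset (x : ι → V) :
      x ∈ Fintype.piFinset (fun i => if i ∈ J then {0} else univ) ↔ ∀ i ∈ J, x i = 0 := by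
    rw [Fintype.mem_piFinset]
    refine forall_congr' fun i => ?_
    split_ifs with hi <;> simp [hi]
  rw [Nat.subtype_card _ mem_piFinset, Fintype.card_piFinset, ← card_compl, ← prod_const]
  simp [apply_ite Finset.card, prod_ite, filter_not, compl_eq_univ_sdiff]

theorem card_matrix_forall_mem_eq_zero [Fintype F] [Fintype κ] (J : Finset ι) :
    Nat.card {X : Matrix ι κ F // ∀ i ∈ J, X i = 0} =
      (Fintype.card F ^ Fintype.card κ) ^ (Fintype.card ι - #J) := by
  rw [← Nat.card_eq_fintype_card (α := F), ← Nat.card_eq_fintype_card (α := κ), ← Nat.card_fun,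
    ← card_forall_mem_eq_zero]
  rfl

omit [Fintype ι] in
theorem card_not_disjoint_range_vanishingOn_mul_le [Finite ι] [Fintype F] [Fintype κ]
    (J : Finset ι) (t : ℕ) :
    Nat.card {W : FixedRankMatrix ι κ F t //
      ¬ Disjoint (LinearMap.range W.1.mulVecLin) (vanishingOn F J)} *
        ((Fintype.card F - 1) * Fintype.card F ^ #J) ≤
      Fintype.card F ^ t * Nat.card (FixedRankMatrix ι κ F t) := by
  cases nonempty_fintype ι
  have h := card_not_disjoint_range_mul_le (κ := κ) (vanishingOn F J) t
  have card_vanishingOn :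
      Nat.card (vanishingOn F J) = Fintype.card F ^ (Fintype.card ι - #J) := by
    rw [← Nat.card_eq_fintype_card (α := F)]
    simp_rw [← card_forall_mem_eq_zero J, ← mem_vanishingOn]
  rw [card_vanishingOn, ← Nat.sub_add_cancel (card_le_univ J), pow_add] at h
  refine Nat.le_of_mul_le_mul_right (c := Fintype.card F ^ (Fintype.card ι - #J)) ?_
    (pow_pos Fintype.card_pos _)
  convert h using 1
  · ring
  · rw [Nat.add_sub_cancel]
    ring

theorem exists_mul_add_eq_of_disjoint_range [Fintype κ] {J : Finset ι} {X W : Matrix ι κ F}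
    (hX : ∀ i ∈ J, X i = 0) (hW : Disjoint (LinearMap.range W.mulVecLin) (vanishingOn F J)) :
    ∃ D : Matrix ι ι F, (∀ i ∈ J, D i = 0) ∧ D * (X + W) = X := by
  classical
  obtain ⟨f, hf_mem, hf_id, hf_zero⟩ := exists_forall_apply_eq_of_disjoint hW.symm
  refine ⟨LinearMap.toMatrix' f, fun i hi => funext fun j => ?_,
    mulVec_injective (funext fun u => ?_)⟩
  · exact mem_vanishingOn.1 (hf_mem (Pi.single j 1)) i hi
  · have X_mulVec_mem : X *ᵥ u ∈ vanishingOn F J :=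
      mem_vanishingOn.2 fun i hi => by simp [mulVec, hX i hi]
    rw [← mulVec_mulVec, LinearMap.toMatrix'_mulVec, add_mulVec, map_add, hf_id _ X_mulVec_mem,
      hf_zero (W *ᵥ u) ⟨u, rfl⟩, add_zero]

open Classical in
/-- The inputs among which the receiver of `Y` looks for the transmitted one, when the rows with
index in `J` are known to vanish: the products `D * Y` with `D` subject to the same constraint. -/
noncomputable def decodingList [Fintype F] (J : Finset ι) (Y : Matrix ι κ F) :
    Finset (Matrix ι κ F) :=
  ({D | ∀ i ∈ J, D i = 0} : Finset (Matrix ι ι F)).image (· * Y)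

theorem card_decodingList_le [Fintype F] (J : Finset ι) (Y : Matrix ι κ F) :
    #(decodingList J Y) ≤ (Fintype.card F ^ Fintype.card ι) ^ (Fintype.card ι - #J) := by
  classical
  refine card_image_le.trans_eq ?_
  rw [← card_matrix_forall_mem_eq_zero, Nat.card_eq_fintype_card, Fintype.card_subtype]

theorem mem_decodingList [Fintype F] {J : Finset ι} {X Y : Matrix ι κ F} :
    X ∈ decodingList J Y ↔ ∃ D : Matrix ι ι F, (∀ i ∈ J, D i = 0) ∧ D * Y = X := by
  simp [decodingList]

theorem mem_decodingList_mul_add [Fintype F] [Fintype κ] [DecidableEq ι] {J : Finset ι}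
    {X W : Matrix ι κ F} (hX : ∀ i ∈ J, X i = 0)
    (hW : Disjoint (LinearMap.range W.mulVecLin) (vanishingOn F J)) (A : GL ι F) :
    X ∈ decodingList J (A.1 * (X + W)) := by
  obtain ⟨D, hDJ, hD⟩ := exists_mul_add_eq_of_disjoint_range hX hW
  refine mem_decodingList.2 ⟨D * A⁻¹.1, fun i hi => ?_, ?_⟩
  · rw [mul_apply_eq_vecMul, hDJ i hi, zero_vecMul]
  · rw [Matrix.mul_assoc, ← Matrix.mul_assoc A⁻¹.1, ← Units.val_mul, inv_mul_cancel, Units.val_one,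
      Matrix.one_mul, hD]

end Decoding

section Channel

variable {F : Type} [Field F] [Fintype F] {n m t : ℕ}

theorem sum_ammcKernel_eq (X : Matrix (Fin n) (Fin m) F) (S : Finset (Matrix (Fin n) (Fin m) F)) :
    ∑ Y ∈ S, ammcKernel F n m t X Y =
      (Nat.card {p : GL (Fin n) F × FixedRankMatrix (Fin n) (Fin m) F t //
          p.1.1 * (X + p.2.1) ∈ S} : ℝ) /
        (Nat.card (GL (Fin n) F) * Nat.card (FixedRankMatrix (Fin n) (Fin m) F t)) := by
  classical
  unfold ammcKernel
  rw [← sum_div, ← Nat.cast_sum]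
  congr 2
  simp_rw [Nat.card_eq_fintype_card, Fintype.card_subtype]
  let output (p : GL (Fin n) F × FixedRankMatrix (Fin n) (Fin m) F t) := p.1.1 * (X + p.2.1)
  have maps_to : Set.MapsTo output ({p | output p ∈ S} : Finset _) S :=
    fun p hp => by simpa using hp
  refine Eq.symm ((card_eq_sum_card_fiberwise maps_to).trans
    (sum_congr rfl fun Y hY => congrArg _ ?_))
  ext p
  simp only [mem_filter, mem_univ, true_and]
  exact ⟨And.right, fun h => ⟨by rwa [show output p = Y from h], h⟩⟩

theorem ammcKernel_mem_stdSimplex (htn : t ≤ n) (htm : t ≤ m) (X : Matrix (Fin n) (Fin m) F) :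
    ammcKernel F n m t X ∈ stdSimplex ℝ (Matrix (Fin n) (Fin m) F) := by
  refine ⟨fun Y => by unfold ammcKernel; positivity, ?_⟩
  rw [sum_ammcKernel_eq, Nat.card_congr (Equiv.subtypeUnivEquiv fun _ => mem_univ _), Nat.card_prod,
    Nat.cast_mul]
  have card_noise_pos := card_fixedRankMatrix_pos F htn htm
  have card_GL_pos : 0 < Nat.card (GL (Fin n) F) := Nat.card_pos
  exact div_self (by positivity)

theorem one_sub_div_le_sum_ammcKernel (htn : t ≤ n) (htm : t ≤ m) {X : Matrix (Fin n) (Fin m) F}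
    {S : Finset (Matrix (Fin n) (Fin m) F)} {bad : FixedRankMatrix (Fin n) (Fin m) F t → Prop}
    (h : ∀ W, ¬ bad W → ∀ A : GL (Fin n) F, A.1 * (X + W.1) ∈ S) :
    1 - (Nat.card {W // bad W} : ℝ) / Nat.card (FixedRankMatrix (Fin n) (Fin m) F t) ≤
      ∑ Y ∈ S, ammcKernel F n m t X Y := by
  classical
  have card_noise_pos := card_fixedRankMatrix_pos F htn htm
  have card_GL_pos : 0 < Nat.card (GL (Fin n) F) := Nat.card_pos
  have card_good : Nat.card {W // bad W} + Nat.card {W // ¬ bad W} =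
      Nat.card (FixedRankMatrix (Fin n) (Fin m) F t) := by
    rw [← Nat.card_sum, Nat.card_congr (Equiv.sumCompl bad)]
  have card_le : Nat.card (GL (Fin n) F) * Nat.card {W // ¬ bad W} ≤
      Nat.card {p : GL (Fin n) F × FixedRankMatrix (Fin n) (Fin m) F t //
        p.1.1 * (X + p.2.1) ∈ S} := by
    rw [← Nat.card_prod]
    refine Nat.card_le_card_of_injective (fun p => ⟨(p.1, p.2.1), h _ p.2.2 p.1⟩) fun p p' hp => ?_
    have := Prod.ext_iff.1 (Subtype.mk.inj hp)
    exact Prod.ext this.1 (Subtype.ext this.2)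
  rw [sum_ammcKernel_eq, one_sub_div (by positivity), div_le_div_iff₀ (by positivity)
    (by positivity), ← card_good]
  have := (Nat.cast_le (α := ℝ)).2 card_le
  push_cast at this ⊢
  nlinarith

theorem one_sub_le_sum_decodingList_ammcKernel [DecidableEq F] {J : Finset (Fin n)} (htn : t ≤ n)
    (htm : t ≤ m) {X : Matrix (Fin n) (Fin m) F} (hX : ∀ i ∈ J, X i = 0) :
    1 - (Fintype.card F : ℝ) ^ t / ((Fintype.card F - 1) * Fintype.card F ^ #J) ≤
      ∑ Y with X ∈ decodingList J Y, ammcKernel F n m t X Y := by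
  classical
  refine le_trans ?_ (one_sub_div_le_sum_ammcKernel htn htm
    (bad := fun W => ¬ Disjoint (LinearMap.range W.1.mulVecLin) (vanishingOn F J))
    fun W hW A => mem_filter.2 ⟨mem_univ _, mem_decodingList_mul_add hX (not_not.1 hW) A⟩)
  have card_noise_pos := card_fixedRankMatrix_pos F htn htm
  have one_lt_card : (1 : ℝ) < Fintype.card F := by exact_mod_cast Fintype.one_lt_card
  have h := (Nat.cast_le (α := ℝ)).2
    (card_not_disjoint_range_vanishingOn_mul_le (F := F) (κ := Fin m) J t)
  push_cast [Nat.cast_sub (Fintype.one_lt_card (α := F)).le] at h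
  have : (0 : ℝ) < Fintype.card F - 1 := sub_pos.2 one_lt_card
  refine sub_le_sub_left ?_ 1
  rwa [div_le_div_iff₀ (by positivity) (by positivity)]

end Channel

section Capacity

variable {F : Type} [Field F] [Fintype F] {n m t : ℕ}

theorem kernel_exponent_le {r : ℕ} (hnm : 2 * n ≤ m + t) (ht : t ≤ n) (hr : r ≤ n) :
    r * t + t * (n - t) + (n - r) * n + (m * r + r * (n - r)) ≤
      (m - n) * (n - t) + (n * n + (m * t + t * (n - t))) := by
  obtain ⟨a, rfl⟩ := Nat.exists_eq_add_of_le hr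
  have hm : r + a ≤ m := by lia
  rw [Nat.add_sub_cancel_left]
  -- The two exponents differ by `(n - r) * (m + t - n - r)`.
  have excess_nonneg : (0 : ℤ) ≤ a * (m + t - 2 * (r + a)) + a * a := by
    have : (0 : ℤ) ≤ m + t - 2 * (r + a) := by lia
    positivity
  zify [ht, hm]
  linarith

theorem card_mul_add_eq_mul_card_le (hnm : 2 * n ≤ m + t) (ht : t ≤ n)
    (X Y : Matrix (Fin n) (Fin m) F) :
    Nat.card {p : GL (Fin n) F × FixedRankMatrix (Fin n) (Fin m) F t //
        p.1.1 * (X + p.2.1) = Y} *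
        ((n + 1) * Nat.card (FixedRankMatrix (Fin n) (Fin m) F Y.rank)) ≤
      2 ^ (5 * n) * Fintype.card F ^ ((m - n) * (n - t)) *
        (Nat.card (GL (Fin n) F) * Nat.card (FixedRankMatrix (Fin n) (Fin m) F t)) := by
  have card_fibre_le := card_mul_add_eq_le X Y t
  have card_rank_le := card_fixedRankMatrix_le (ι := Fin n) (κ := Fin m) (F := F) Y.rank
  have le_card_GL := pow_le_two_pow_mul_card_GL F n
  have le_card_noise := (pow_mul_pow_le_card_fixedRankMatrix F ht (show t ≤ m by lia)).trans
    (Nat.mul_le_mul_right _ (Nat.pow_le_pow_right two_pos ht))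
  have exponent_le := kernel_exponent_le hnm ht Y.rank_le_height
  simp only [Fintype.card_fin] at card_fibre_le card_rank_le
  generalize Y.rank = r at *
  set q := Fintype.card F
  calc _ ≤ 2 ^ n * ((q ^ r) ^ t * (q ^ t) ^ (n - t)) * (q ^ (n - r)) ^ n *
          (2 ^ n * (2 ^ n * ((q ^ m) ^ r * (q ^ r) ^ (n - r)))) := by
        gcongr
        exact Nat.lt_two_pow_self
    _ = 2 ^ (3 * n) * q ^ (r * t + t * (n - t) + (n - r) * n + (m * r + r * (n - r))) := by ring
    _ ≤ 2 ^ (3 * n) * q ^ ((m - n) * (n - t) + (n * n + (m * t + t * (n - t)))) := by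
        gcongr
        exact Fintype.card_pos
    _ = 2 ^ (3 * n) * q ^ ((m - n) * (n - t)) *
          ((q ^ n) ^ n * ((q ^ m) ^ t * (q ^ t) ^ (n - t))) := by ring
    _ ≤ 2 ^ (3 * n) * q ^ ((m - n) * (n - t)) *
          (2 ^ n * Nat.card (GL (Fin n) F) *
            (2 ^ n * Nat.card (FixedRankMatrix (Fin n) (Fin m) F t))) := by gcongr
    _ = _ := by ring

theorem ammcKernel_le (hnm : 2 * n ≤ m + t) (ht : t ≤ n) (X Y : Matrix (Fin n) (Fin m) F) :
    ammcKernel F n m t X Y ≤ 2 ^ (5 * n) * (Fintype.card F : ℝ) ^ ((m - n) * (n - t)) *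
      ((Nat.card (FixedRankMatrix (Fin n) (Fin m) F Y.rank) : ℝ)⁻¹ / (n + 1)) := by
  have card_rank_pos :=
    card_fixedRankMatrix_pos F Y.rank_le_height (Y.rank_le_height.trans (show n ≤ m by lia))
  have card_noise_pos := card_fixedRankMatrix_pos F ht (show t ≤ m by lia)
  have card_GL_pos : 0 < Nat.card (GL (Fin n) F) := Nat.card_pos
  unfold ammcKernel
  rw [inv_eq_one_div, div_div, mul_one_div, div_le_div_iff₀ (by positivity) (by positivity),
    mul_comm _ ((n : ℝ) + 1)]
  exact_mod_cast card_mul_add_eq_mul_card_le hnm ht X Y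

theorem ammcCapacity_le (hnm : 2 * n ≤ m + t) (ht : t ≤ n) :
    ammcCapacity F n m t ≤
      ((m : ℝ) - n) * ((n : ℝ) - t) + 5 * n * logb (Fintype.card F) 2 := by
  have one_lt_card : (1 : ℝ) < Fintype.card F := by exact_mod_cast Fintype.one_lt_card
  refine capacityB_le fun p hp => ?_
  refine (mutualInfoB_le_logb one_lt_card hp (ammcKernel_mem_stdSimplex ht (by lia))
    (fun Y => by positivity) ?_ (by positivity) (ammcKernel_le hnm ht)).trans_eq ?_
  · rw [← sum_div, div_le_one (by positivity)]
    refine (sum_inv_card_fiber_le (f := Matrix.rank) (s := range (n + 1)) fun Y =>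
      mem_range.2 (Nat.lt_succ_of_le Y.rank_le_height)).trans_eq ?_
    rw [card_range, Nat.cast_add_one]
  · rw [logb_mul (by positivity) (by positivity), logb_pow, logb_pow,
      logb_self_eq_one one_lt_card]
    push_cast [Nat.cast_sub ht, Nat.cast_sub (show n ≤ m by lia)]
    ring

theorem le_ammcCapacity {v : ℕ} (hnm : n ≤ m) (ht : t ≤ n) (hv : v ≤ n) :
    (1 - (Fintype.card F : ℝ) ^ t / ((Fintype.card F - 1) * Fintype.card F ^ v)) *
        (((m : ℝ) - n) * ((n : ℝ) - v)) - logb (Fintype.card F) 2 ≤ ammcCapacity F n m t := by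
  classical
  have one_lt_card : (1 : ℝ) < Fintype.card F := by exact_mod_cast Fintype.one_lt_card
  obtain ⟨J, -, rfl⟩ := exists_subset_card_eq (s := (univ : Finset (Fin n))) (by simpa using hv)
  let codebook : Finset (Matrix (Fin n) (Fin m) F) := {X | ∀ i ∈ J, X i = 0}
  have card_codebook : #codebook = (Fintype.card F ^ m) ^ (n - #J) := by
    have h := card_matrix_forall_mem_eq_zero (F := F) (κ := Fin m) J
    rwa [Nat.card_eq_fintype_card, Fintype.card_subtype, Fintype.card_fin, Fintype.card_fin] at h
  have h := mul_logb_sub_logb_two_le_capacityB one_lt_card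
    (ammcKernel_mem_stdSimplex ht (ht.trans hnm)) (S := codebook) (L := decodingList J)
    (ℓ := (Fintype.card F ^ n) ^ (n - #J)) (by positivity) ?_ (fun Y => ?_)
    fun X hX => one_sub_le_sum_decodingList_ammcKernel ht (ht.trans hnm) (mem_filter.1 hX).2
  · refine le_of_eq_of_le ?_ h
    have ratio : (#codebook : ℝ) / ((Fintype.card F ^ n) ^ (n - #J) : ℕ) =
        (Fintype.card F : ℝ) ^ ((m - n) * (n - #J)) := by
      rw [card_codebook, Nat.cast_pow, Nat.cast_pow, Nat.cast_pow, Nat.cast_pow, ← div_pow,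
        pow_mul, pow_sub₀ _ (by positivity) hnm, div_eq_mul_inv]
    rw [ratio, logb_pow, logb_self_eq_one one_lt_card]
    push_cast [Nat.cast_sub hv, Nat.cast_sub hnm]
    ring
  · rw [card_codebook]
    gcongr
    exact Fintype.card_pos
  · simpa using card_decodingList_le J Y

theorem logb_card_two_le_one (F : Type*) [Field F] [Fintype F] : logb (Fintype.card F) 2 ≤ 1 := by
  have two_le_card : (2 : ℝ) ≤ Fintype.card F := by exact_mod_cast Fintype.one_lt_card (α := F)
  rw [logb_le_iff_le_rpow (by linarith) two_pos, rpow_one]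
  exact two_le_card

theorem abs_ammcCapacity_sub_le_of_card (hnm : 2 * n ≤ m + t) (ht : t ≤ n) :
    |ammcCapacity F n m t - ((m : ℝ) - n) * ((n : ℝ) - t)| ≤
      ((m : ℝ) - n) * ((n : ℝ) - t) * ((Fintype.card F : ℝ) - 1)⁻¹ +
        (5 * n + 1) * logb (Fintype.card F) 2 := by
  have one_lt_card : (1 : ℝ) < Fintype.card F := by exact_mod_cast Fintype.one_lt_card
  have hnm' : (n : ℝ) ≤ m := by exact_mod_cast show n ≤ m by lia
  have ht' : (t : ℝ) ≤ n := by exact_mod_cast ht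
  have upper := ammcCapacity_le (F := F) hnm ht
  have lower := le_ammcCapacity (F := F) (show n ≤ m by lia) ht ht
  rw [div_mul_cancel_right₀ (by positivity)] at lower
  have log_nonneg := logb_nonneg one_lt_card one_le_two
  have inv_nonneg : 0 ≤ ((m : ℝ) - n) * ((n : ℝ) - t) * ((Fintype.card F : ℝ) - 1)⁻¹ :=
    mul_nonneg (mul_nonneg (sub_nonneg.2 hnm') (sub_nonneg.2 ht'))
      (inv_nonneg.2 (sub_nonneg.2 one_lt_card.le))
  have : 0 ≤ n * logb (Fintype.card F) 2 := by positivity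
  rw [abs_le]
  constructor <;> linarith

-- With `s` zero rows beyond `t`, decoding fails with probability at most `2⁻ˢ` over every field.
theorem sub_le_ammcCapacity (hnm : n ≤ m) (ht : t ≤ n) (s : ℕ) :
    ((m : ℝ) - n) * ((n : ℝ) - t) - ((m : ℝ) - n) * (s + n * (1 / 2) ^ s) - 1 ≤
      ammcCapacity F n m t := by
  have two_le_card : (2 : ℝ) ≤ Fintype.card F := by exact_mod_cast Fintype.one_lt_card (α := F)
  have log_le := logb_card_two_le_one F
  have hmn : (0 : ℝ) ≤ m - n := sub_nonneg.2 (by exact_mod_cast hnm)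
  refine le_trans ?_ (le_ammcCapacity hnm ht (min_le_left n (t + s)))
  set q : ℝ := ((Fintype.card F : ℕ) : ℝ)
  suffices h : (n : ℝ) - t - (s + n * (1 / 2) ^ s) ≤
      (1 - q ^ t / ((q - 1) * q ^ min n (t + s))) * ((n : ℝ) - (min n (t + s) : ℕ)) by
    have := mul_le_mul_of_nonneg_left h hmn
    linarith
  have pow_nonneg : (0 : ℝ) ≤ n * (1 / 2) ^ s := by positivity
  rcases le_total n (t + s) with hle | hle
  · rw [min_eq_left hle, sub_self, mul_zero]
    have : (n : ℝ) ≤ t + s := by exact_mod_cast hle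
    linarith
  · rw [min_eq_right hle]
    have error_le : q ^ t / ((q - 1) * q ^ (t + s)) ≤ (1 / 2) ^ s := by
      rw [_root_.one_div_pow, div_le_div_iff₀ (by nlinarith [show 0 < q ^ (t + s) by positivity])
        (by positivity), pow_add]
      calc q ^ t * 2 ^ s ≤ q ^ t * q ^ s := by gcongr
        _ ≤ 1 * ((q - 1) * (q ^ t * q ^ s)) := by
          rw [one_mul]
          exact le_mul_of_one_le_left (by positivity) (by linarith)
    have h := mul_le_mul error_le (sub_le_self (n : ℝ) (Nat.cast_nonneg (t + s)))
      (sub_nonneg.2 (by exact_mod_cast hle)) (by positivity)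
    push_cast at h ⊢
    linarith

theorem abs_ammcCapacity_div_sub_le (hn : 0 < n) (hnm : 2 * n ≤ m + t) (ht : t ≤ n) (s : ℕ) :
    |ammcCapacity F n m t / (n * m) - (1 - (n : ℝ) / m) * (1 - (t : ℝ) / n)| ≤
      s / n + (1 / 2) ^ s + 5 / n := by
  have hn' : (0 : ℝ) < n := by exact_mod_cast hn
  have hnm' : (n : ℝ) ≤ m := by exact_mod_cast show n ≤ m by lia
  have hm' : (0 : ℝ) < m := hn'.trans_le hnm'
  have upper := ammcCapacity_le (F := F) hnm ht
  have lower := sub_le_ammcCapacity (F := F) (show n ≤ m by lia) ht s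
  have log_le := mul_le_mul_of_nonneg_left (logb_card_two_le_one F) hn'.le
  have loss_le : ((m : ℝ) - n) * (s + n * (1 / 2) ^ s) ≤ m * (s + n * (1 / 2) ^ s) :=
    mul_le_mul_of_nonneg_right (by linarith) (by positivity)
  have loss_nonneg : (0 : ℝ) ≤ m * (s + n * (1 / 2) ^ s) := by positivity
  have one_le_m : (1 : ℝ) ≤ m := by exact_mod_cast show 1 ≤ m by lia
  have normalize : ammcCapacity F n m t / (n * m) - (1 - (n : ℝ) / m) * (1 - (t : ℝ) / n) =
      (ammcCapacity F n m t - ((m : ℝ) - n) * ((n : ℝ) - t)) / (n * m) := by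
    field_simp
  rw [normalize, abs_div, abs_of_pos (mul_pos hn' hm'), div_le_iff₀ (mul_pos hn' hm')]
  calc _ ≤ (m : ℝ) * (s + n * (1 / 2) ^ s) + 5 * m := by
        rw [abs_le]
        constructor <;> linarith
    _ = _ := by field_simp

end Capacity

section Asymptotics

theorem tendsto_logb_two_atTop : Tendsto (fun b : ℝ => logb b 2) atTop (𝓝 0) := by
  simp only [← log_div_log]
  exact tendsto_const_nhds.div_atTop tendsto_log_atTop

theorem tendsto_sqrt_div_add_half_pow_sqrt :
    Tendsto (fun n : ℕ => (Nat.sqrt n : ℝ) / n + (1 / 2) ^ Nat.sqrt n + 5 / n) atTop (𝓝 0) := by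
  have sqrt_atTop : Tendsto Nat.sqrt atTop atTop :=
    tendsto_atTop.2 fun r => eventually_atTop.2 ⟨r * r, fun _ => Nat.le_sqrt.2⟩
  have sqrt_div : Tendsto (fun n : ℕ => (Nat.sqrt n : ℝ) / n) atTop (𝓝 0) := by
    refine squeeze_zero (fun n => by positivity) (fun n => ?_)
      (tendsto_inv_atTop_zero.comp (tendsto_sqrt_atTop.comp tendsto_natCast_atTop_atTop))
    rw [Function.comp_apply, Function.comp_apply, ← sqrt_div_self]
    gcongr
    exact nat_sqrt_le_real_sqrt
  have half_pow : Tendsto (fun n : ℕ => (1 / 2 : ℝ) ^ Nat.sqrt n) atTop (𝓝 0) :=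
    (tendsto_pow_atTop_nhds_zero_of_lt_one (by norm_num) (by norm_num)).comp sqrt_atTop
  simpa using (sqrt_div.add half_pow).add (tendsto_const_div_atTop_nhds_zero_nat 5)

theorem tendsto_natCast_mul_div_mul (a b : ℕ) :
    Tendsto (fun k : ℕ => ((a * k : ℕ) : ℝ) / (b * k : ℕ)) atTop (𝓝 (a / b)) := by
  refine tendsto_const_nhds.congr' ?_
  filter_upwards [eventually_ne_atTop 0] with k hk
  push_cast
  exact (mul_div_mul_right _ _ (by exact_mod_cast hk)).symm

theorem exists_forall_abs_ammcCapacity_sub_lt {n m t : ℕ} (hnm : 2 * n ≤ m + t) (ht : t ≤ n)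
    {ε : ℝ} (hε : 0 < ε) :
    ∃ Q : ℕ, ∀ (F : Type) [Field F] [Fintype F], Q < Fintype.card F →
      |ammcCapacity F n m t - ((m : ℝ) - n) * ((n : ℝ) - t)| < ε := by
  have bound_tendsto : Tendsto (fun q : ℝ =>
      ((m : ℝ) - n) * ((n : ℝ) - t) * (q - 1)⁻¹ + (5 * n + 1) * logb q 2) atTop (𝓝 0) := by
    simpa [Function.comp_def, ← sub_eq_add_neg] using ((tendsto_inv_atTop_zero.comp
      (tendsto_atTop_add_const_right _ (-1 : ℝ) tendsto_id)).const_mul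
        (((m : ℝ) - n) * ((n : ℝ) - t))).add (tendsto_logb_two_atTop.const_mul (5 * n + 1 : ℝ))
  obtain ⟨Q, hQ⟩ := eventually_atTop.1
    ((bound_tendsto.comp tendsto_natCast_atTop_atTop).eventually_lt_const hε)
  exact ⟨Q, fun F _ _ hF => (abs_ammcCapacity_sub_le_of_card hnm ht).trans_lt (hQ _ hF.le)⟩

theorem tendsto_ammcCapacity_div {ι : Type*} {l : Filter ι} {F : ι → Type} [∀ i, Field (F i)]
    [∀ i, Fintype (F i)] {n m t : ι → ℕ} {lam τ : ℝ} (hn : Tendsto n l atTop)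
    (hnm : ∀ᶠ i in l, 2 * n i ≤ m i + t i) (ht : ∀ᶠ i in l, t i ≤ n i)
    (hlam : Tendsto (fun i => (n i : ℝ) / m i) l (𝓝 lam))
    (hτ : Tendsto (fun i => (t i : ℝ) / n i) l (𝓝 τ)) :
    Tendsto (fun i => ammcCapacity (F i) (n i) (m i) (t i) / (n i * m i)) l
      (𝓝 ((1 - lam) * (1 - τ))) := by
  have main := (hlam.const_sub 1).mul (hτ.const_sub 1)
  have error : Tendsto (fun i => ammcCapacity (F i) (n i) (m i) (t i) / (n i * m i) -
      (1 - (n i : ℝ) / m i) * (1 - (t i : ℝ) / n i)) l (𝓝 0) := by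
    refine squeeze_zero_norm' ?_ (tendsto_sqrt_div_add_half_pow_sqrt.comp hn)
    filter_upwards [hn.eventually_gt_atTop 0, hnm, ht] with i hni hnmi hti
    exact abs_ammcCapacity_div_sub_le hni hnmi hti _
  simpa using error.add main

end Asymptotics

theorem stmt_18_general :
    (∀ n m t : ℕ, 2 * n ≤ m + t → t ≤ n → ∀ ε > (0 : ℝ), ∃ Q : ℕ,
      ∀ (F : Type) [Field F] [Fintype F], Q < Fintype.card F →
        |ammcCapacity F n m t - ((m : ℝ) - n) * ((n : ℝ) - t)| < ε) ∧
    (∀ {ι : Type*} {l : Filter ι} {F : ι → Type} [∀ i, Field (F i)] [∀ i, Fintype (F i)]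
      {n m t : ι → ℕ} {lam τ : ℝ}, Tendsto n l atTop → (∀ᶠ i in l, 2 * n i ≤ m i + t i) →
      (∀ᶠ i in l, t i ≤ n i) → Tendsto (fun i => (n i : ℝ) / m i) l (𝓝 lam) →
      Tendsto (fun i => (t i : ℝ) / n i) l (𝓝 τ) →
      Tendsto (fun i => ammcCapacity (F i) (n i) (m i) (t i) / (n i * m i)) l
        (𝓝 ((1 - lam) * (1 - τ)))) :=
  ⟨fun _ _ _ hnm ht _ hε => exists_forall_abs_ammcCapacity_sub_lt hnm ht hε,
    tendsto_ammcCapacity_div⟩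

/-- for `0 < λ = n/m ≤ 1/2` and `τ = t/n` fixed, the AMMC capacity satisfies
`lim_{q→∞} C = (m-n)(n-t)` (for fixed `n, m, t`), and, writing `λ = a/b`, `τ = c/a`,
`n = ak`, `m = bk`, `t = ck`, `lim_{k→∞} C/(nm) = (1-λ)(1-τ)`. -/
theorem stmt_18 :
    (∀ n m t : ℕ, 0 < n → 2 * n ≤ m → t ≤ n →
      ∀ ε > (0 : ℝ), ∃ Q : ℕ,
        ∀ (F : Type) [Field F] [Fintype F], Q < Fintype.card F →
          |ammcCapacity F n m t - ((m : ℝ) - n) * ((n : ℝ) - t)| < ε) ∧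
    (∀ (F : Type) [Field F] [Fintype F], ∀ a b c : ℕ, 0 < a → 2 * a ≤ b → c ≤ a →
      Filter.Tendsto
        (fun k : ℕ =>
          ammcCapacity F (a * k) (b * k) (c * k) / ((a * k : ℝ) * (b * k : ℝ)))
        Filter.atTop
        (nhds ((1 - (a : ℝ) / b) * (1 - (c : ℝ) / a)))) :=
  ⟨fun _ _ _ _ hnm ht => stmt_18_general.{0}.1 _ _ _ (by lia) ht, fun F _ _ a b c ha hab hc => by
    simpa only [Nat.cast_mul] using stmt_18_general.2 (F := fun _ => F)
      (n := fun k => a * k) (m := fun k => b * k) (t := fun k => c * k)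
      (tendsto_id.const_mul_atTop' ha) (.of_forall fun k => by nlinarith)
      (.of_forall fun k => Nat.mul_le_mul_right k hc) (tendsto_natCast_mul_div_mul a b)
      (tendsto_natCast_mul_div_mul c a)⟩
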